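/- Let A be a C*-algebra and α : A → A an automorphism. Let τ̂ be the automorphism of C₀(ℝ) induced by translation t ↦ t+1. Then the crossed product (C₀(ℝ) ⊗ A) ⋊_{τ̂ ⊗ α} ℤ is isomorphic to the mapping torus MT_{id_𝒦 ⊗ α} = { f ∈ C([0,1], 𝒦 ⊗ A) : (id_𝒦 ⊗ α)(f(0)) = f(1) } of the automorphism id_𝒦 ⊗ α of 𝒦 ⊗ A. -/

import Mathlib

/-!
The isomorphism is constructed on the generators `b uⁿ` of the crossed product and extended by a
uniqueness argument for C*-algebras with a faithful expectation.

*Moving matrix units.* Write `KA` as `𝒦(ℓ²(ℤ)) ⊗ A`. The bilateral shift is the product of the two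
permutation involutions `k ↦ -k` and `k ↦ -1 - k`. The identity is joined to a multiple
of a unitary involution `R` by the unitaries `cos (πt/2) + i sin (πt/2) R`, so there is a path of orthonormal bases
`v_k(t)` of `ℓ²(ℤ)` from `e_k` to (a multiple of) `e_{k-1}`, each `v_k(t)` being a combination of
at most four basis vectors. Hence `|v_i(t)⟩⟨v_j(t)| ⊗ a` makes sense in `KA` without multiplier
algebras, and for each `t` these elements are again matrix units over `A`
(`StabilizationData.path`).

*The representation.* Put `rep n b (t) = ∑ₖ |v_k(t)⟩⟨v_{k+n}(t)| ⊗ αᵏ(b(k - t))`. The partial sums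
along a diagonal are bounded by the largest entry, so the series converges uniformly in `t`. The
covariance relations are a computation with matrix units, and the boundary condition at `t = 1`
holds because `v_k(1)` is proportional to `v_{k-1}(0)`. The argument `k - t`, rather than `k + t`,
makes the twist `α` and not `α⁻¹`.

*Density.* The span of the `rep n b` is a module over the continuous functions on the circle and
its values are dense in `KA` at every point of `[0,1]`, so a partition of unity on the circle shows
that its closure is the whole mapping torus (`MappingTorus.closure_repSpan`).

*Extension.* Let `D` be the closed span of the pairs `(b uⁿ, rep n b)` in `C × C([0,1], KA)`. It is
a C*-algebra, and both coordinate projections are injective on it: the expectation `E` on the first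
factor and the compressions by the corners `|v_i(t)⟩⟨v_i(t)| ⊗ A` on the second determine each
other, and both detect elements of the form `y* y`. Injective `*`-homomorphisms are isometric, so
the projections are isomorphisms of `D` onto `C` and onto the closed span of the `rep n b`
(`exists_starHom_of_compressions`).
-/

open scoped ZeroAtInfty

noncomputable section

/-- Data exhibiting a C*-algebra `KA` as the stabilization `𝒦(ℓ²(ℤ)) ⊗ A` of `A`:
a system `θ i j a` ("`e_{ij} ⊗ a`") of matrix units over `A` which is linear in `a`,
satisfies the matrix unit relations, is isometric, and has dense linear span. -/
structure StabilizationData (A KA : Type) [NonUnitalCStarAlgebra A]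
    [NonUnitalCStarAlgebra KA] where
  θ : ℤ → ℤ → A → KA
  θ_add : ∀ i j a b, θ i j (a + b) = θ i j a + θ i j b
  θ_smul : ∀ i j (c : ℂ) a, θ i j (c • a) = c • θ i j a
  θ_mul : ∀ i j k l a b, θ i j a * θ k l b = if j = k then θ i l (a * b) else 0
  θ_star : ∀ i j a, star (θ i j a) = θ j i (star a)
  θ_norm : ∀ i j a, ‖θ i j a‖ = ‖a‖
  θ_dense : closure (Submodule.span ℂ (⋃ i, ⋃ j, Set.range (θ i j)) : Set KA) = Set.univ

/-- Data exhibiting a C*-algebra `C` as the crossed product `B ⋊_γ ℤ` of the ℤ-action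
`γ` on `B`: maps `Φ n b` (representing `ι(b)uⁿ` for the canonical covariant pair)
satisfying the covariance relations, spanning a dense subspace, and admitting a faithful
conditional expectation `E` onto the canonical copy of `B`.  (`ℤ` being amenable, this
characterises the reduced = full crossed product.) -/
structure CrossedProductData (B C : Type) [NonUnitalCStarAlgebra B]
    [NonUnitalCStarAlgebra C] (γ : ℤ → B ≃⋆ₐ[ℂ] B) where
  Φ : ℤ → B → C
  Φ_add : ∀ n a b, Φ n (a + b) = Φ n a + Φ n b
  Φ_smul : ∀ n (c : ℂ) b, Φ n (c • b) = c • Φ n b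
  Φ_mul : ∀ n m a b, Φ n a * Φ m b = Φ (n + m) (a * γ n b)
  Φ_star : ∀ n b, star (Φ n b) = Φ (-n) (γ (-n) (star b))
  Φ_isometric : ∀ b, ‖Φ 0 b‖ = ‖b‖
  Φ_dense : closure (Submodule.span ℂ (⋃ n : ℤ, Set.range (Φ n)) : Set C) = Set.univ
  E : C →L[ℂ] C
  E_Φ : ∀ n b, E (Φ n b) = if n = 0 then Φ 0 b else 0
  E_faithful : ∀ c : C, E (star c * c) = 0 → c = 0

/-! ### Uniqueness of completions with a faithful expectation -/

/-- A covariant family `Ψ n b` in a C*-algebra `C'` extends to an isomorphism of the crossed product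
onto the closed span of the family, provided there are continuous linear maps `T x` on `C'` which
kill `Ψ n b` for `n ≠ 0`, jointly separate the `Ψ 0 b`, and jointly detect the elements `y* y`. The
maps `T x` take the place of a faithful conditional expectation on `C'`. -/
theorem exists_starHom_of_compressions {B C C' W ι : Type} [NonUnitalCStarAlgebra B]
    [NonUnitalCStarAlgebra C] [NonUnitalCStarAlgebra C'] [NormedAddCommGroup W]
    [NormedSpace ℂ W] {γ : ℤ → B ≃⋆ₐ[ℂ] B} (hC : CrossedProductData B C γ)
    (Ψ : ℤ → B → C')
    (hadd : ∀ a b, Ψ 0 (a + b) = Ψ 0 a + Ψ 0 b)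
    (hsmul : ∀ (c : ℂ) b, Ψ 0 (c • b) = c • Ψ 0 b)
    (hmul : ∀ n m a b, Ψ n a * Ψ m b = Ψ (n + m) (a * γ n b))
    (hstar : ∀ n b, star (Ψ n b) = Ψ (-n) (γ (-n) (star b)))
    (hcont : Continuous (Ψ 0))
    (T : ι → C' →L[ℂ] W)
    (hT0 : ∀ x n b, n ≠ 0 → T x (Ψ n b) = 0)
    (hTB : ∀ b, (∀ x, T x (Ψ 0 b) = 0) → b = 0)
    (hTf : ∀ y, (∀ x, T x (star y * y) = 0) → y = 0) :
    ∃ ψ : C →⋆ₙₐ[ℂ] C', Function.Injective ψ ∧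
      Set.range ψ = closure (Submodule.span ℂ (⋃ n : ℤ, Set.range (Ψ n)) : Set C') := by
  set G : Set (C × C') := {d | ∃ n b, d = (hC.Φ n b, Ψ n b)} with hG
  let D₀ : NonUnitalStarSubalgebra ℂ (C × C') :=
    { Submodule.span ℂ G with
      mul_mem' := by
        intro x y hx hy
        change x * y ∈ Submodule.span ℂ G
        change x ∈ Submodule.span ℂ G at hx
        change y ∈ Submodule.span ℂ G at hy
        induction hx, hy using Submodule.span_induction₂ with
        | mem_mem x y hx hy =>
          obtain ⟨n, a, rfl⟩ := hx
          obtain ⟨m, b, rfl⟩ := hy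
          refine Submodule.subset_span ⟨n + m, a * γ n b, ?_⟩
          rw [Prod.mk_mul_mk, hC.Φ_mul, hmul]
        | zero_left y hy => simp
        | zero_right x hx => simp
        | add_left x y z _ _ _ h1 h2 => rw [add_mul]; exact add_mem h1 h2
        | add_right x y z _ _ _ h1 h2 => rw [mul_add]; exact add_mem h1 h2
        | smul_left r x y _ _ h => rw [smul_mul_assoc]; exact Submodule.smul_mem _ _ h
        | smul_right r x y _ _ h => rw [mul_smul_comm]; exact Submodule.smul_mem _ _ h
      star_mem' := by
        intro x hx
        change star x ∈ Submodule.span ℂ G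
        change x ∈ Submodule.span ℂ G at hx
        induction hx using Submodule.span_induction with
        | mem x hx =>
          obtain ⟨n, a, rfl⟩ := hx
          refine Submodule.subset_span ⟨-n, γ (-n) (star a), ?_⟩
          rw [← hC.Φ_star, ← hstar]
          rfl
        | zero => simp
        | add x y _ _ h1 h2 => rw [star_add]; exact add_mem h1 h2
        | smul r x _ h => rw [star_smul]; exact Submodule.smul_mem _ _ h }
  let D : NonUnitalStarSubalgebra ℂ (C × C') := D₀.topologicalClosure
  have hDc : IsClosed (D : Set (C × C')) := D₀.isClosed_topologicalClosure
  have hDcl : (D : Set (C × C')) = closure (Submodule.span ℂ G : Set (C × C')) := rfl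
  have hgen : ∀ n b, ((hC.Φ n b, Ψ n b) : C × C') ∈ D := fun n b =>
    D₀.le_topologicalClosure (Submodule.subset_span ⟨n, b, rfl⟩)
  let Φ₀ : B →ₗᵢ[ℂ] C :=
    { toFun := hC.Φ 0
      map_add' := hC.Φ_add 0
      map_smul' := hC.Φ_smul 0
      norm_map' := hC.Φ_isometric }
  let Ψ₀ : B →ₗ[ℂ] C' :=
    { toFun := Ψ 0
      map_add' := hadd
      map_smul' := hsmul }
  have hemb : Topology.IsClosedEmbedding Φ₀ := Φ₀.isometry.isClosedEmbedding
  -- every element of the span satisfies the compatibility of `E` with the compressions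
  have hspan : ∀ d ∈ Submodule.span ℂ G, ∃ b, hC.E d.1 = Φ₀ b ∧ ∀ x, T x d.2 = T x (Ψ₀ b) := by
    intro d hd
    induction hd using Submodule.span_induction with
    | mem d hd =>
      obtain ⟨n, a, rfl⟩ := hd
      by_cases hn : n = 0
      · subst hn
        exact ⟨a, by simp [hC.E_Φ, Φ₀], fun x => rfl⟩
      · exact ⟨0, by simp [hC.E_Φ, hn], fun x => by simp [hT0 x n a hn]⟩
    | zero => exact ⟨0, by simp, by simp⟩
    | add d e _ _ h1 h2 =>
      obtain ⟨b, hb, hb'⟩ := h1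
      obtain ⟨b', hc, hc'⟩ := h2
      exact ⟨b + b', by simp [hb, hc], fun x => by simp [hb', hc']⟩
    | smul r d _ h =>
      obtain ⟨b, hb, hb'⟩ := h
      exact ⟨r • b, by simp [hb], fun x => by simp [hb']⟩
  have hcomp : ∀ d ∈ D, ∃ b, hC.E d.1 = Φ₀ b ∧ ∀ x, T x d.2 = T x (Ψ₀ b) := by
    intro d hd
    rw [← SetLike.mem_coe, hDcl, mem_closure_iff_seq_limit] at hd
    obtain ⟨u, hu, hlim⟩ := hd
    choose b hb hbT using fun k => hspan (u k) (hu k)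
    have h1 : Filter.Tendsto (fun k => Φ₀ (b k)) Filter.atTop (nhds (hC.E d.1)) := by
      simp only [← hb]
      exact (hC.E.continuous.tendsto _).comp ((continuous_fst.tendsto _).comp hlim)
    obtain ⟨b₀, hb₀⟩ : hC.E d.1 ∈ Set.range Φ₀ :=
      hemb.isClosed_range.mem_of_tendsto h1 (Filter.Eventually.of_forall fun k => ⟨b k, rfl⟩)
    rw [← hb₀] at h1
    have h2 : Filter.Tendsto b Filter.atTop (nhds b₀) := hemb.isInducing.tendsto_nhds_iff.2 h1
    refine ⟨b₀, hb₀.symm, fun x => ?_⟩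
    have h3 : Filter.Tendsto (fun k => T x (Ψ₀ (b k))) Filter.atTop (nhds (T x (Ψ₀ b₀))) :=
      ((T x).continuous.tendsto _).comp ((hcont.tendsto _).comp h2)
    have h4 : Filter.Tendsto (fun k => T x (u k).2) Filter.atTop (nhds (T x d.2)) :=
      ((T x).continuous.tendsto _).comp ((continuous_snd.tendsto _).comp hlim)
    simp only [hbT] at h4
    exact tendsto_nhds_unique h4 h3
  have : IsClosed (D : Set (C × C')) := hDc
  let _ : NonUnitalCStarAlgebra D := NonUnitalStarSubalgebra.nonUnitalCStarAlgebra D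
  let p₁ : D →⋆ₙₐ[ℂ] C := (NonUnitalStarAlgHom.fst ℂ C C').comp
    (NonUnitalStarSubalgebraClass.subtype D)
  let p₂ : D →⋆ₙₐ[ℂ] C' := (NonUnitalStarAlgHom.snd ℂ C C').comp
    (NonUnitalStarSubalgebraClass.subtype D)
  have hp₁ : ∀ d : D, p₁ d = d.1.1 := fun _ => rfl
  have hp₂ : ∀ d : D, p₂ d = d.1.2 := fun _ => rfl
  have inj₁ : Function.Injective p₁ := by
    rw [injective_iff_map_eq_zero]
    intro d hd
    rw [hp₁] at hd
    obtain ⟨b, hb, hbT⟩ := hcomp _ (star d * d).2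
    have hb0 : b = 0 := by
      apply Φ₀.injective
      rw [← hb]
      simp [hd]
    have : d.1.2 = 0 := by
      apply hTf
      intro x
      have := hbT x
      simpa [hb0] using this
    exact Subtype.ext (Prod.ext hd this)
  have inj₂ : Function.Injective p₂ := by
    rw [injective_iff_map_eq_zero]
    intro d hd
    rw [hp₂] at hd
    obtain ⟨b, hb, hbT⟩ := hcomp _ (star d * d).2
    have hb0 : b = 0 := by
      apply hTB
      intro x
      have := hbT x
      simpa [hd, Ψ₀] using this.symm
    have : d.1.1 = 0 := by
      apply hC.E_faithful
      simpa [hb0] using hb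
    exact Subtype.ext (Prod.ext this hd)
  have cl₁ : IsClosed (Set.range p₁) :=
    (NonUnitalStarAlgHom.isometry p₁ inj₁).isClosedEmbedding.isClosed_range
  have cl₂ : IsClosed (Set.range p₂) :=
    (NonUnitalStarAlgHom.isometry p₂ inj₂).isClosedEmbedding.isClosed_range
  have surj₁ : Function.Surjective p₁ := by
    have h : (Submodule.span ℂ (⋃ n : ℤ, Set.range (hC.Φ n)) : Set C) ⊆ Set.range p₁ := by
      intro c hc
      induction hc using Submodule.span_induction with
      | mem c hc =>
        obtain ⟨n, b, rfl⟩ := Set.mem_iUnion.1 hc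
        exact ⟨⟨_, hgen n b⟩, rfl⟩
      | zero => exact ⟨0, map_zero _⟩
      | add c d _ _ h1 h2 =>
        obtain ⟨x, rfl⟩ := h1
        obtain ⟨y, rfl⟩ := h2
        exact ⟨x + y, map_add _ _ _⟩
      | smul r c _ h =>
        obtain ⟨x, rfl⟩ := h
        exact ⟨r • x, map_smul _ _ _⟩
    have h' := closure_minimal h cl₁
    rw [hC.Φ_dense] at h'
    exact fun c => h' (Set.mem_univ c)
  have range₂ : Set.range p₂ = closure (Submodule.span ℂ (⋃ n : ℤ, Set.range (Ψ n)) : Set C') := by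
    apply Set.Subset.antisymm
    · rintro _ ⟨d, rfl⟩
      rw [hp₂]
      have hd : d.1 ∈ closure (Submodule.span ℂ G : Set (C × C')) := d.2
      refine map_mem_closure continuous_snd hd ?_
      intro e he
      induction he using Submodule.span_induction with
      | mem e he =>
        obtain ⟨n, b, rfl⟩ := he
        exact Submodule.subset_span (Set.mem_iUnion.2 ⟨n, b, rfl⟩)
      | zero => exact zero_mem _
      | add _ _ _ _ h1 h2 => exact add_mem h1 h2
      | smul r _ _ h => exact Submodule.smul_mem _ r h
    · refine closure_minimal ?_ cl₂
      intro c hc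
      induction hc using Submodule.span_induction with
      | mem c hc =>
        obtain ⟨n, b, rfl⟩ := Set.mem_iUnion.1 hc
        exact ⟨⟨_, hgen n b⟩, rfl⟩
      | zero => exact ⟨0, map_zero _⟩
      | add c d _ _ h1 h2 =>
        obtain ⟨x, rfl⟩ := h1
        obtain ⟨y, rfl⟩ := h2
        exact ⟨x + y, map_add _ _ _⟩
      | smul r c _ h =>
        obtain ⟨x, rfl⟩ := h
        exact ⟨r • x, map_smul _ _ _⟩
  let e : D ≃⋆ₐ[ℂ] C := StarAlgEquiv.ofBijective p₁ ⟨inj₁, surj₁⟩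
  refine ⟨p₂.comp (e.symm : C →⋆ₙₐ[ℂ] D), ?_, ?_⟩
  · exact inj₂.comp e.symm.injective
  · rw [← range₂]
    exact e.symm.surjective.range_comp p₂

/-! ### Systems of matrix units -/

namespace StabilizationData

variable {A KA : Type} [NonUnitalCStarAlgebra A] [NonUnitalCStarAlgebra KA]

/-- The embedding `a ↦ e_{ij} ⊗ a` as a linear isometry. -/
def θₗ (S : StabilizationData A KA) (i j : ℤ) : A →ₗᵢ[ℂ] KA where
  toFun := S.θ i j
  map_add' := S.θ_add i j
  map_smul' := S.θ_smul i j
  norm_map' := S.θ_norm i j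

theorem θ_zero (S : StabilizationData A KA) (i j : ℤ) : S.θ i j 0 = 0 := (S.θₗ i j).map_zero

@[fun_prop]
theorem continuous_θ (S : StabilizationData A KA) (i j : ℤ) : Continuous (S.θ i j) :=
  (S.θₗ i j).continuous

theorem θ_injective (S : StabilizationData A KA) (i j : ℤ) : Function.Injective (S.θ i j) :=
  (S.θₗ i j).injective

/-- The multiplication of a C*-algebra is nondegenerate. -/
theorem eq_zero_of_mul_mul {A : Type} [NonUnitalCStarAlgebra A] (a : A)
    (h : ∀ x y : A, x * a * y = 0) : a = 0 := by
  have h1 := h (star a) (star a * a)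
  have h2 : star (star a * a) * (star a * a) = 0 := by
    rw [← h1]; simp [mul_assoc]
  rw [CStarRing.star_mul_self_eq_zero_iff, CStarRing.star_mul_self_eq_zero_iff] at h2
  exact h2

/-- The corners `e_{ii} ⊗ A` detect positive elements. -/
theorem eq_zero_of_corners (S : StabilizationData A KA) (y : KA)
    (h : ∀ i a b, S.θ i i a * (star y * y) * S.θ i i b = 0) : y = 0 := by
  have h1 : ∀ i a, y * S.θ i i a = 0 := by
    intro i a
    rw [← CStarRing.star_mul_self_eq_zero_iff, star_mul, S.θ_star, ← h i (star a) a]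
    simp only [mul_assoc]
  have h2 : ∀ i j a, y * S.θ i j a = 0 := by
    intro i j a
    rw [← CStarRing.mul_star_self_eq_zero_iff, star_mul, S.θ_star, mul_assoc,
      ← mul_assoc (S.θ i j a), S.θ_mul, if_pos rfl, ← mul_assoc, h1, zero_mul]
  have h3 : ∀ x : KA, y * x = 0 := by
    have hc : IsClosed {x : KA | y * x = 0} :=
      isClosed_eq (continuous_const.mul continuous_id) continuous_const
    have hs : (Submodule.span ℂ (⋃ i, ⋃ j, Set.range (S.θ i j)) : Set KA) ⊆
        {x : KA | y * x = 0} := by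
      intro x hx
      induction hx using Submodule.span_induction with
      | mem x hx =>
        simp only [Set.mem_iUnion, Set.mem_range] at hx
        obtain ⟨i, j, a, rfl⟩ := hx
        exact h2 i j a
      | zero => simp
      | add x z _ _ hx hz =>
        simp only [Set.mem_ofPred_eq] at hx hz ⊢
        rw [mul_add, hx, hz, add_zero]
      | smul r x _ hx =>
        simp only [Set.mem_ofPred_eq] at hx ⊢
        rw [mul_smul_comm, hx, smul_zero]
    have := closure_minimal hs hc
    rw [S.θ_dense] at this
    exact fun x => this (Set.mem_univ x)
  exact (CStarRing.mul_star_self_eq_zero_iff y).1 (h3 _)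

/-- A finite sum along one diagonal has norm at most the largest norm of its entries. -/
theorem norm_sum_le (S : StabilizationData A KA) (n : ℤ) (F : Finset ℤ) (x : ℤ → A) (M : ℝ)
    (hM : 0 ≤ M) (hx : ∀ k ∈ F, ‖x k‖ ≤ M) : ‖∑ k ∈ F, S.θ k (k + n) (x k)‖ ≤ M := by
  -- the diagonal embedding of the finite product of copies of `A` is contractive
  let δ : (F → A) →⋆ₙₐ[ℂ] KA :=
    { toFun := fun z => ∑ k : F, S.θ k k (z k)
      map_smul' := fun c z => by simp [S.θ_smul, Finset.smul_sum]
      map_zero' := by simp [S.θ_zero]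
      map_add' := fun z w => by simp [S.θ_add, Finset.sum_add_distrib]
      map_mul' := fun z w => by
        simp [Finset.sum_mul_sum, S.θ_mul]
      map_star' := fun z => by simp [S.θ_star] }
  have hX : (∑ k ∈ F, S.θ k (k + n) (x k)) * star (∑ k ∈ F, S.θ k (k + n) (x k)) =
      δ (fun k => x k * star (x k)) := by
    change _ = ∑ k : F, S.θ k k (x k * star (x k))
    rw [Finset.sum_coe_sort F (fun k => S.θ k k (x k * star (x k))), star_sum, Finset.sum_mul_sum]
    refine Finset.sum_congr rfl fun k hk => ?_
    simp [S.θ_star, S.θ_mul, hk]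
  have h1 : ‖∑ k ∈ F, S.θ k (k + n) (x k)‖ * ‖∑ k ∈ F, S.θ k (k + n) (x k)‖ ≤ M * M := by
    rw [← CStarRing.norm_self_mul_star, hX]
    refine (NonUnitalStarAlgHom.norm_apply_le δ _).trans ?_
    refine (pi_norm_le_iff_of_nonneg (mul_nonneg hM hM)).2 fun k => ?_
    rw [CStarRing.norm_self_mul_star]
    exact mul_self_le_mul_self (norm_nonneg _) (hx k k.2)
  exact (mul_self_le_mul_self_iff (norm_nonneg _) hM).2 h1

end StabilizationData

/-! ### Rotating matrix units along an involution -/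

namespace StabilizationData

variable {A KA : Type} [NonUnitalCStarAlgebra A] [NonUnitalCStarAlgebra KA]

/-- The element `|vᵢ⟩⟨vⱼ| ⊗ a` for the vectors `vᵢ = c eᵢ + s e_{σ i}`. -/
def twistθ (S : StabilizationData A KA) (σ : ℤ → ℤ) (c s : ℂ) (i j : ℤ) (a : A) : KA :=
  (c * star c) • S.θ i j a + (c * star s) • S.θ i (σ j) a +
    (s * star c) • S.θ (σ i) j a + (s * star s) • S.θ (σ i) (σ j) a

variable (S : StabilizationData A KA) {σ : ℤ → ℤ} {c s : ℂ}

theorem twistθ_add (i j : ℤ) (a b : A) : S.twistθ σ c s i j (a + b) =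
    S.twistθ σ c s i j a + S.twistθ σ c s i j b := by
  simp only [twistθ, S.θ_add]; module

theorem twistθ_smul (i j : ℤ) (r : ℂ) (a : A) : S.twistθ σ c s i j (r • a) =
    r • S.twistθ σ c s i j a := by
  simp only [twistθ, S.θ_smul]; module

theorem twistθ_star (i j : ℤ) (a : A) : star (S.twistθ σ c s i j a) =
    S.twistθ σ c s j i (star a) := by
  simp only [twistθ, star_add, star_smul, S.θ_star, star_mul, star_star]; module

theorem twistθ_mul (hσ : Function.Involutive σ) (h1 : c * star c + s * star s = 1)
    (h2 : c * star s + s * star c = 0) (i j k l : ℤ) (a b : A) :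
    S.twistθ σ c s i j a * S.twistθ σ c s k l b =
      if j = k then S.twistθ σ c s i l (a * b) else 0 := by
  have e1 : σ j = σ k ↔ j = k := hσ.injective.eq_iff
  have e2 : σ j = k ↔ j = σ k := hσ.eq_iff
  simp only [twistθ, mul_add, add_mul, smul_mul_assoc, mul_smul_comm, S.θ_mul, e1, e2]
  by_cases h : j = k
  · by_cases h' : j = σ k
    · simp only [if_pos h, if_pos h']
      trans (c * star c + s * star s + (c * star s + s * star c)) •
        ((c * star c) • S.θ i l (a * b) + (c * star s) • S.θ i (σ l) (a * b) +
        (s * star c) • S.θ (σ i) l (a * b) + (s * star s) • S.θ (σ i) (σ l) (a * b))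
      · module
      · rw [h1, h2, add_zero, one_smul]
    · simp only [if_pos h, if_neg h']
      trans (c * star c + s * star s) •
        ((c * star c) • S.θ i l (a * b) + (c * star s) • S.θ i (σ l) (a * b) +
        (s * star c) • S.θ (σ i) l (a * b) + (s * star s) • S.θ (σ i) (σ l) (a * b))
      · module
      · rw [h1, one_smul]
  · by_cases h' : j = σ k
    · simp only [if_neg h, if_pos h']
      trans (c * star s + s * star c) •
        ((c * star c) • S.θ i l (a * b) + (c * star s) • S.θ i (σ l) (a * b) +
        (s * star c) • S.θ (σ i) l (a * b) + (s * star s) • S.θ (σ i) (σ l) (a * b))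
      · module
      · rw [h2, zero_smul]
    · simp [if_neg h, if_neg h']

/-- The vectors `vᵢ` span: `eᵢ = c̄ vᵢ + s̄ v_{σ i}`. -/
theorem twistθ_inv (hσ : Function.Involutive σ) (h1 : c * star c + s * star s = 1)
    (h2 : c * star s + s * star c = 0) (i j : ℤ) (a : A) :
    S.θ i j a = (star c * c) • S.twistθ σ c s i j a + (star c * s) • S.twistθ σ c s i (σ j) a +
      (star s * c) • S.twistθ σ c s (σ i) j a + (star s * s) • S.twistθ σ c s (σ i) (σ j) a := by
  simp only [twistθ, hσ i, hσ j]
  set p := c * star c + s * star s with hp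
  set q := c * star s + s * star c with hq
  have key : S.θ i j a = (p * p) • S.θ i j a + (p * q) • S.θ i (σ j) a + (q * p) • S.θ (σ i) j a +
      (q * q) • S.θ (σ i) (σ j) a := by
    rw [h1, h2]; simp
  refine key.trans ?_
  rw [hp, hq]
  module

/-- Compressing `|vⱼ⟩⟨vⱼ| ⊗ a` to all other positions shows that it determines `a`. -/
theorem twistθ_injective (hσ : Function.Involutive σ) (h1 : c * star c + s * star s = 1)
    (h2 : c * star s + s * star c = 0) (j : ℤ) (a : A) (h : S.twistθ σ c s j j a = 0) : a = 0 := by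
  refine eq_zero_of_mul_mul a fun x y => ?_
  have hz : ∀ i k, S.twistθ σ c s i k (x * a * y) = 0 := by
    intro i k
    have : S.twistθ σ c s i j x * S.twistθ σ c s j j a * S.twistθ σ c s j k y =
        S.twistθ σ c s i k (x * a * y) := by
      simp [S.twistθ_mul hσ h1 h2]
    rw [← this, h]; simp
  apply S.θ_injective j j
  rw [S.twistθ_inv hσ h1 h2, S.θ_zero]
  simp [hz]

/-- The matrix units over `A` belonging to the orthonormal basis `vᵢ = c eᵢ + s e_{σ i}`, where
`σ` is an involution and `c`, `s` make the corresponding matrix unitary. -/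
def twist (σ : ℤ → ℤ) (c s : ℂ) (hσ : Function.Involutive σ) (h1 : c * star c + s * star s = 1)
    (h2 : c * star s + s * star c = 0) : StabilizationData A KA where
  θ := S.twistθ σ c s
  θ_add := S.twistθ_add
  θ_smul := S.twistθ_smul
  θ_mul := S.twistθ_mul hσ h1 h2
  θ_star := S.twistθ_star
  θ_norm i j a := by
    -- an injective `*`-homomorphism of C*-algebras is isometric
    let φ : A →⋆ₙₐ[ℂ] KA :=
      { toFun := S.twistθ σ c s j j
        map_smul' := S.twistθ_smul j j
        map_zero' := by simpa using S.twistθ_smul j j 0 (0 : A)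
        map_add' := S.twistθ_add j j
        map_mul' := fun x y => by simp [S.twistθ_mul hσ h1 h2]
        map_star' := fun x => (S.twistθ_star j j x).symm }
    have hφ : Function.Injective φ := by
      rw [injective_iff_map_eq_zero]
      exact fun x hx => S.twistθ_injective hσ h1 h2 j x hx
    have h : ‖S.twistθ σ c s i j a‖ * ‖S.twistθ σ c s i j a‖ = ‖a‖ * ‖a‖ := by
      rw [← CStarRing.norm_star_mul_self, twistθ_star, S.twistθ_mul hσ h1 h2, if_pos rfl,
        ← CStarRing.norm_star_mul_self]
      exact NonUnitalStarAlgHom.norm_map φ hφ _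
    exact (mul_self_inj (norm_nonneg _) (norm_nonneg _)).1 h
  θ_dense := by
    refine Set.eq_univ_of_univ_subset ?_
    rw [← S.θ_dense]
    refine closure_mono (Submodule.span_le.2 ?_)
    intro x hx
    simp only [Set.mem_iUnion, Set.mem_range] at hx
    obtain ⟨i, j, a, rfl⟩ := hx
    have hm : ∀ i j a, S.twistθ σ c s i j a ∈
        Submodule.span ℂ (⋃ i, ⋃ j, Set.range (S.twistθ σ c s i j)) := fun i j a =>
      Submodule.subset_span (Set.mem_iUnion.2 ⟨i, Set.mem_iUnion.2 ⟨j, a, rfl⟩⟩)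
    rw [SetLike.mem_coe, S.twistθ_inv hσ h1 h2 i j a]
    exact add_mem (add_mem (add_mem (Submodule.smul_mem _ _ (hm _ _ _))
      (Submodule.smul_mem _ _ (hm _ _ _))) (Submodule.smul_mem _ _ (hm _ _ _)))
      (Submodule.smul_mem _ _ (hm _ _ _))

/-- The coefficient `cos (π t / 2)`. -/
def co (t : ℝ) : ℂ := (Real.cos (Real.pi / 2 * t) : ℂ)

/-- The coefficient `i sin (π t / 2)`. -/
def si (t : ℝ) : ℂ := (Real.sin (Real.pi / 2 * t) : ℂ) * Complex.I

theorem co_si_one (t : ℝ) : co t * star (co t) + si t * star (si t) = 1 := by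
  have h := Complex.cos_sq_add_sin_sq ((Real.pi / 2 * t : ℝ) : ℂ)
  rw [← Complex.ofReal_cos, ← Complex.ofReal_sin] at h
  simp only [co, si, star_mul, RCLike.star_def, Complex.conj_ofReal, Complex.conj_I]
  linear_combination h - (Real.sin (Real.pi / 2 * t) : ℂ) ^ 2 * Complex.I_sq

theorem co_si_zero (t : ℝ) : co t * star (si t) + si t * star (co t) = 0 := by
  simp only [co, si, star_mul, RCLike.star_def, Complex.conj_ofReal, Complex.conj_I]
  ring

@[fun_prop]
theorem continuous_co : Continuous co := by unfold co; fun_prop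

@[fun_prop]
theorem continuous_si : Continuous si := by unfold si; fun_prop

theorem inv₁ : Function.Involutive (fun k : ℤ => -1 - k) := fun k => by ring

theorem inv₂ : Function.Involutive (fun k : ℤ => -k) := fun k => by ring

/-- A continuous path of systems of matrix units over `A`, running from the given one to its
translate by `-1`. The translation is the product of the involutions `k ↦ -1 - k` and `k ↦ -k`,
and each of these is joined to the identity by a norm-continuous path of unitaries in the span
of `1` and the involution. -/
def path (t : ℝ) : StabilizationData A KA :=
  (S.twist _ (co t) (si t) inv₁ (co_si_one t) (co_si_zero t)).twist _ (co t) (si t) inv₂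
    (co_si_one t) (co_si_zero t)

theorem path_continuous {X : Type} [TopologicalSpace X] (τ : X → ℝ) (hτ : Continuous τ)
    (f : X → A) (hf : Continuous f) (i j : ℤ) :
    Continuous fun x => (S.path (τ x)).θ i j (f x) := by
  have h : ∀ i j, Continuous fun x => S.θ i j (f x) := fun i j => (S.continuous_θ i j).comp hf
  simp only [path, twist, twistθ]
  fun_prop

theorem path_zero (i j : ℤ) (a : A) : (S.path 0).θ i j a = S.θ i j a := by
  simp [path, twist, twistθ, co, si]

theorem path_one (i j : ℤ) (a : A) : (S.path 1).θ i j a = S.θ (i - 1) (j - 1) a := by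
  simp [path, twist, twistθ, co, si, sub_eq_add_neg, add_comm]

theorem map_path (ᾱ : KA ≃⋆ₐ[ℂ] KA) (α : A ≃⋆ₐ[ℂ] A)
    (h : ∀ i j a, ᾱ (S.θ i j a) = S.θ i j (α a)) (t : ℝ) (i j : ℤ) (a : A) :
    ᾱ ((S.path t).θ i j a) = (S.path t).θ i j (α a) := by
  simp [path, twist, twistθ, h]

end StabilizationData

/-! ### The covariant representation on the mapping torus -/

namespace MappingTorus

open StabilizationData unitInterval

variable {A KA : Type} [NonUnitalCStarAlgebra A] [NonUnitalCStarAlgebra KA]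

theorem zpow_add_apply (α : A ≃⋆ₐ[ℂ] A) (m n : ℤ) (a : A) :
    (α ^ (m + n)) a = (α ^ m) ((α ^ n) a) := by
  rw [zpow_add, StarAlgEquiv.aut_mul]; rfl

theorem norm_zpow (α : A ≃⋆ₐ[ℂ] A) (m : ℤ) (a : A) : ‖(α ^ m) a‖ = ‖a‖ :=
  NonUnitalStarAlgHom.norm_map (α ^ m) (α ^ m).injective a

theorem continuous_zpow (α : A ≃⋆ₐ[ℂ] A) (m : ℤ) : Continuous (α ^ m) :=
  (NonUnitalStarAlgHom.isometry (α ^ m) (α ^ m).injective).continuous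

/-- The `n`-th power of `τ̂ ⊗ α` is `f ↦ (t ↦ αⁿ(f(t + n)))`. -/
theorem action_apply (α : A ≃⋆ₐ[ℂ] A) (γ : ℤ → C₀(ℝ, A) ≃⋆ₐ[ℂ] C₀(ℝ, A))
    (hγ_one : ∀ (f : C₀(ℝ, A)) (t : ℝ), γ 1 f t = α (f (t + 1)))
    (hγ_add : ∀ n m : ℤ, γ (n + m) = (γ n).trans (γ m)) (n : ℤ) (f : C₀(ℝ, A)) (t : ℝ) :
    γ n f t = (α ^ n) (f (t + n)) := by
  have hstep : ∀ n f t, γ (n + 1) f t = α (γ n f (t + 1)) := by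
    intro n f t
    rw [hγ_add, ← hγ_one]; rfl
  have hzero : ∀ f, γ 0 f = f := by
    intro f
    apply (γ 0).injective
    have := hγ_add 0 0
    rw [add_zero] at this
    conv_rhs => rw [this]
    rfl
  induction n using Int.induction_on generalizing t with
  | zero => simp [hzero]
  | succ i ih =>
    rw [hstep, ih, add_comm (i : ℤ) 1, zpow_add_apply, zpow_one]
    push_cast
    rw [add_assoc]
  | pred i ih =>
    have h := hstep (-(i : ℤ) - 1) f (t - 1)
    rw [sub_add_cancel, sub_add_cancel, ih] at h
    have h' : α (γ (-(i : ℤ) - 1) f t) = α ((α ^ (-(i : ℤ) - 1)) (f (t + ↑(-(i : ℤ) - 1)))) := by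
      conv_lhs => rw [← h, show -(i : ℤ) = 1 + (-(i : ℤ) - 1) by ring, zpow_add_apply, zpow_one]
      congr 3
      push_cast
      ring
    exact α.injective h'

/-- The `k`-th entry `t ↦ |v_k(t)⟩⟨v_{k+n}(t)| ⊗ αᵏ(b(k - t))` of the image of `b uⁿ`, where
`v_k(t)` is the basis moving along `StabilizationData.path`. -/
def entry (S : StabilizationData A KA) (α : A ≃⋆ₐ[ℂ] A) (n : ℤ) (b : C₀(ℝ, A)) (k : ℤ) :
    C(I, KA) where
  toFun t := (S.path t).θ k (k + n) ((α ^ k) (b (k - t)))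
  continuous_toFun := S.path_continuous _ continuous_subtype_val _
    ((continuous_zpow α k).comp (b.continuous.comp (by fun_prop))) _ _

variable (S : StabilizationData A KA) (α : A ≃⋆ₐ[ℂ] A)

theorem entry_apply (n : ℤ) (b : C₀(ℝ, A)) (k : ℤ) (t : I) :
    entry S α n b k t = (S.path t).θ k (k + n) ((α ^ k) (b (k - t))) := rfl

theorem norm_sum_entry_le (n : ℤ) (b : C₀(ℝ, A)) (F : Finset ℤ) (M : ℝ) (hM : 0 ≤ M)
    (h : ∀ k ∈ F, ∀ t : I, ‖b (k - t)‖ ≤ M) : ‖∑ k ∈ F, entry S α n b k‖ ≤ M := by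
  refine (ContinuousMap.norm_le _ hM).2 fun t => ?_
  rw [ContinuousMap.sum_apply]
  exact (S.path t).norm_sum_le n F _ M hM fun k hk => by rw [norm_zpow]; exact h k hk t

/-- The entries along a diagonal tend to `0` uniformly in `t`, so they are unconditionally
(in general not absolutely) summable. -/
theorem summable_entry (n : ℤ) (b : C₀(ℝ, A)) : Summable (entry S α n b) := by
  rw [summable_iff_vanishing_norm]
  intro ε hε
  have h0 := b.zero_at_infty'
  rw [← Metric.cobounded_eq_cocompact] at h0
  have h1 := (Metric.hasBasis_cobounded_compl_closedBall (0 : ℝ)).eventually_iff.1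
    ((Metric.tendsto_nhds.1 h0) (ε / 2) (by positivity))
  obtain ⟨r, -, hr⟩ := h1
  refine ⟨Finset.Icc (-⌈r⌉ - 1) (⌈r⌉ + 1), fun F hF => ?_⟩
  refine (norm_sum_entry_le S α n b F (ε / 2) (by positivity) fun k hk t => ?_).trans_lt
    (by linarith)
  have hk' : k ∉ Finset.Icc (-⌈r⌉ - 1) (⌈r⌉ + 1) := Finset.disjoint_left.1 hF hk
  have := @hr ((k : ℝ) - t) (by
    simp only [Set.mem_compl_iff, Metric.mem_closedBall, dist_zero_right, Real.norm_eq_abs, not_le]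
    have ht0 := t.2.1
    have ht1 := t.2.2
    have hr' := Int.le_ceil r
    rw [Finset.mem_Icc, not_and_or, not_le, not_le] at hk'
    rcases hk' with hk' | hk'
    · have : (k : ℝ) < -⌈r⌉ - 1 := by exact_mod_cast hk'
      rw [lt_abs]; right; linarith
    · have : (⌈r⌉ : ℝ) + 1 < k := by exact_mod_cast hk'
      rw [lt_abs]; left; linarith)
  rw [dist_zero_right] at this
  exact this.le

/-- The image of `b uⁿ` in the mapping torus. -/
def rep (n : ℤ) (b : C₀(ℝ, A)) : C(I, KA) := ∑' k, entry S α n b k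

theorem hasSum_rep (n : ℤ) (b : C₀(ℝ, A)) : HasSum (entry S α n b) (rep S α n b) :=
  (summable_entry S α n b).hasSum

theorem hasSum_rep_apply (n : ℤ) (b : C₀(ℝ, A)) (t : I) :
    HasSum (fun k : ℤ => (S.path t).θ k (k + n) ((α ^ k) (b (k - t)))) (rep S α n b t) :=
  (hasSum_rep S α n b).map (ContinuousMap.evalCLM ℂ t : C(I, KA) →L[ℂ] KA)
    (ContinuousMap.evalCLM ℂ t).continuous

theorem rep_add (n : ℤ) (a b : C₀(ℝ, A)) : rep S α n (a + b) = rep S α n a + rep S α n b := by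
  refine (hasSum_rep S α n _).unique ?_
  convert (hasSum_rep S α n a).add (hasSum_rep S α n b) using 2 with k
  ext t
  simp [entry_apply, θ_add]

theorem rep_smul (n : ℤ) (r : ℂ) (b : C₀(ℝ, A)) : rep S α n (r • b) = r • rep S α n b := by
  refine (hasSum_rep S α n _).unique ?_
  convert (hasSum_rep S α n b).const_smul r using 2 with k
  ext t
  simp [entry_apply, θ_smul]

theorem norm_rep_le (n : ℤ) (b : C₀(ℝ, A)) : ‖rep S α n b‖ ≤ ‖b‖ := by
  refine le_of_tendsto (hasSum_rep S α n b).norm (Filter.Eventually.of_forall fun F => ?_)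
  exact norm_sum_entry_le S α n b F _ (norm_nonneg _) fun k _ t =>
    b.toBCF.norm_coe_le_norm _

theorem continuous_rep (n : ℤ) : Continuous (rep S α n) :=
  let L : C₀(ℝ, A) →ₗ[ℂ] C(I, KA) :=
    { toFun := rep S α n, map_add' := rep_add S α n, map_smul' := rep_smul S α n }
  (L.mkContinuous 1 fun b => by rw [one_mul]; exact norm_rep_le S α n b).continuous

/-- Only the entry in position `(i, i + n)` survives compression to the rows `i` and columns
`j`. -/
theorem compression_rep (n : ℤ) (b : C₀(ℝ, A)) (t : I) (i j : ℤ) (x y : A) :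
    (S.path t).θ i i x * rep S α n b t * (S.path t).θ j j y =
      if i + n = j then (S.path t).θ i j (x * (α ^ i) (b (i - t)) * y) else 0 := by
  have h := ((hasSum_rep_apply S α n b t).mul_left ((S.path t).θ i i x)).mul_right
    ((S.path t).θ j j y)
  refine h.unique ?_
  convert hasSum_single i ?_ using 1
  · simp only [θ_mul, if_true]
  · intro k hk
    simp [θ_mul, hk.symm]

variable (γ : ℤ → C₀(ℝ, A) ≃⋆ₐ[ℂ] C₀(ℝ, A))

theorem rep_mul (hγ : ∀ n f t, γ n f t = (α ^ n) (f (t + n))) (n m : ℤ) (a b : C₀(ℝ, A)) :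
    rep S α n a * rep S α m b = rep S α (n + m) (a * γ n b) := by
  have h := (hasSum_rep S α n a).mul_right (rep S α m b)
  suffices hk : ∀ k, entry S α n a k * rep S α m b = entry S α (n + m) (a * γ n b) k by
    simp only [hk] at h
    exact h.unique (hasSum_rep S α (n + m) (a * γ n b))
  intro k
  refine ((hasSum_rep S α m b).mul_left _).unique ?_
  convert hasSum_single (k + n) ?_ using 1
  · ext t
    have e : (k : ℝ) - t + n = (k + n : ℤ) - t := by push_cast; ring
    simp only [ContinuousMap.mul_apply, entry_apply, θ_mul, if_true,
      ZeroAtInftyContinuousMap.mul_apply, hγ, map_mul, ← zpow_add_apply, e, add_assoc]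
  · intro l hl
    ext t
    simp [entry_apply, θ_mul, hl.symm]

theorem rep_star (hγ : ∀ n f t, γ n f t = (α ^ n) (f (t + n))) (n : ℤ) (b : C₀(ℝ, A)) :
    star (rep S α n b) = rep S α (-n) (γ (-n) (star b)) := by
  refine (hasSum_rep S α n b).star.unique ?_
  convert (Equiv.addRight n).hasSum_iff.2 (hasSum_rep S α (-n) (γ (-n) (star b))) using 1
  funext k
  ext t
  have e : (k : ℝ) + n - t + -n = k - t := by ring
  have e' : ∀ x, (α ^ (k + n)) ((α ^ (-n)) x) = (α ^ k) x := fun x => by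
    rw [← zpow_add_apply, add_neg_cancel_right]
  simp [-zpow_neg, entry_apply, θ_star, hγ, e, e', map_star]

/-- The image lies in the mapping torus. -/
theorem rep_boundary (ᾱ : KA ≃⋆ₐ[ℂ] KA) (h : ∀ i j a, ᾱ (S.θ i j a) = S.θ i j (α a)) (n : ℤ)
    (b : C₀(ℝ, A)) : ᾱ (rep S α n b 0) = rep S α n b 1 := by
  have hc : Continuous ᾱ := (NonUnitalStarAlgHom.isometry ᾱ ᾱ.injective).continuous
  have h0 := (hasSum_rep_apply S α n b 0).map ᾱ hc
  have h1 := (Equiv.addRight (1 : ℤ)).hasSum_iff.2 (hasSum_rep_apply S α n b 1)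
  refine h0.unique ?_
  convert h1 using 1
  funext k
  have e : (k + 1 + n - 1 : ℤ) = k + n := by ring
  have e' : α ^ (k + 1) = α * α ^ k := by rw [add_comm, zpow_add, zpow_one]
  simp [path_zero, path_one, h, e, e']

end MappingTorus

/-! ### Density in the mapping torus -/

namespace MappingTorus

open StabilizationData unitInterval

variable {A KA : Type} [NonUnitalCStarAlgebra A] [NonUnitalCStarAlgebra KA]

/-- The product of `b` with a continuous `1`-periodic function. -/
def modulate (φ : C(AddCircle (1 : ℝ), ℝ)) (b : C₀(ℝ, A)) : C₀(ℝ, A) where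
  toFun s := ((φ (s : AddCircle (1 : ℝ)) : ℝ) : ℂ) • b s
  continuous_toFun := (Complex.continuous_ofReal.comp
    (φ.continuous.comp (AddCircle.continuous_mk' 1))).smul b.continuous
  zero_at_infty' := by
    refine squeeze_zero_norm (a := fun s => ‖φ‖ * ‖b s‖) (fun s => ?_) ?_
    · rw [norm_smul, Complex.norm_real]
      exact mul_le_mul_of_nonneg_right (φ.norm_coe_le_norm _) (norm_nonneg _)
    · simpa using (b.zero_at_infty'.norm).const_mul ‖φ‖

/-- A hat function of height `a` supported within distance `1` of `s`. -/
def hat (s : ℝ) (a : A) : C₀(ℝ, A) where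
  toFun x := ((max 0 (1 - |x - s|) : ℝ) : ℂ) • a
  continuous_toFun := by fun_prop
  zero_at_infty' := by
    refine HasCompactSupport.is_zero_at_infty (HasCompactSupport.of_support_subset_isCompact
      (isCompact_closedBall s 1) fun x hx => ?_)
    by_contra h
    rw [Metric.mem_closedBall, not_le, Real.dist_eq] at h
    apply hx
    simp [max_eq_left (by linarith : 1 - |x - s| ≤ 0)]

theorem hat_apply (s : ℝ) (a : A) (x : ℝ) :
    hat s a x = ((max 0 (1 - |x - s|) : ℝ) : ℂ) • a := rfl

variable (S : StabilizationData A KA) (α : A ≃⋆ₐ[ℂ] A)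

theorem rep_modulate (φ : C(AddCircle (1 : ℝ), ℝ)) (n : ℤ) (b : C₀(ℝ, A)) (t : I) :
    rep S α n (modulate φ b) t =
      ((φ ((-t : ℝ) : AddCircle (1 : ℝ)) : ℝ) : ℂ) • rep S α n b t := by
  refine (hasSum_rep_apply S α n _ t).unique ?_
  convert (hasSum_rep_apply S α n b t).const_smul
    ((φ ((-t : ℝ) : AddCircle (1 : ℝ)) : ℝ) : ℂ) using 1
  funext k
  have e : (((k : ℝ) - t : ℝ) : AddCircle (1 : ℝ)) = ((-t : ℝ) : AddCircle (1 : ℝ)) := by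
    rw [← sub_eq_zero, ← AddCircle.coe_sub, AddCircle.coe_eq_zero_iff]
    exact ⟨k, by simp⟩
  change (S.path t).θ k (k + n) ((α ^ k) (((φ (((k : ℝ) - t : ℝ) : AddCircle (1 : ℝ)) : ℝ) : ℂ) •
    b (k - t))) = _
  rw [e, map_smul, θ_smul]

theorem rep_hat (n i : ℤ) (t : I) (a : A) :
    rep S α n (hat (i - t) a) t = (S.path t).θ i (i + n) ((α ^ i) a) := by
  refine (hasSum_rep_apply S α n _ t).unique ?_
  convert hasSum_single i ?_ using 1
  · simp [hat_apply]
  · intro k hk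
    have h1 : (1 : ℝ) ≤ |(k : ℝ) - i| := by
      have : (1 : ℤ) ≤ |k - i| := Int.one_le_abs (sub_ne_zero.2 hk)
      exact_mod_cast this
    have h2 : (k : ℝ) - t - (i - t) = k - i := by ring
    rw [hat_apply, h2, max_eq_left (by linarith)]
    simp [θ_zero]

/-- The linear span of the `rep n b`. -/
def repSpan : Submodule ℂ C(I, KA) := Submodule.span ℂ (⋃ n : ℤ, Set.range (rep S α n))

theorem rep_mem (n : ℤ) (b : C₀(ℝ, A)) : rep S α n b ∈ repSpan S α :=
  Submodule.subset_span (Set.mem_iUnion.2 ⟨n, b, rfl⟩)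

/-- The span is a module over the continuous functions on the circle. -/
theorem modulate_mem (φ : C(AddCircle (1 : ℝ), ℝ)) (d : C(I, KA)) (hd : d ∈ repSpan S α) :
    ∃ e ∈ repSpan S α, ∀ t : I, e t = ((φ ((-t : ℝ) : AddCircle (1 : ℝ)) : ℝ) : ℂ) • d t := by
  unfold repSpan at hd
  induction hd using Submodule.span_induction with
  | mem d hd =>
    obtain ⟨n, b, rfl⟩ := Set.mem_iUnion.1 hd
    exact ⟨_, rep_mem S α n (modulate φ b), rep_modulate S α φ n b⟩
  | zero => exact ⟨0, zero_mem _, by simp⟩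
  | add x y _ _ h1 h2 =>
    obtain ⟨e, he, he'⟩ := h1
    obtain ⟨e₁, he₁, he₁'⟩ := h2
    exact ⟨e + e₁, add_mem he he₁, fun t => by simp [he', he₁']⟩
  | smul r x _ h =>
    obtain ⟨e, he, he'⟩ := h
    exact ⟨r • e, Submodule.smul_mem _ _ he, fun t => by simp [he', smul_comm r]⟩

theorem exists_near_at (t : I) (x : KA) (ε : ℝ) (hε : 0 < ε) :
    ∃ d ∈ repSpan S α, ‖x - d t‖ < ε := by
  have hx : x ∈ closure (Submodule.span ℂ (⋃ i, ⋃ j, Set.range ((S.path t).θ i j)) : Set KA) := by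
    rw [(S.path t).θ_dense]; trivial
  obtain ⟨y, hy, hxy⟩ := Metric.mem_closure_iff.1 hx ε hε
  suffices h : ∃ d ∈ repSpan S α, d t = y by
    obtain ⟨d, hd, rfl⟩ := h
    exact ⟨d, hd, by rwa [← dist_eq_norm]⟩
  clear hxy
  induction hy using Submodule.span_induction with
  | mem y hy =>
    simp only [Set.mem_iUnion, Set.mem_range] at hy
    obtain ⟨i, j, a, rfl⟩ := hy
    refine ⟨_, rep_mem S α (j - i) (hat (i - t) ((α ^ i).symm a)), ?_⟩
    rw [rep_hat]
    simp
  | zero => exact ⟨0, zero_mem _, rfl⟩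
  | add x y _ _ h1 h2 =>
    obtain ⟨e, he, rfl⟩ := h1
    obtain ⟨e₁, he₁, rfl⟩ := h2
    exact ⟨e + e₁, add_mem he he₁, rfl⟩
  | smul r x _ h =>
    obtain ⟨e, he, rfl⟩ := h
    exact ⟨r • e, Submodule.smul_mem _ _ he, rfl⟩

theorem boundary_of_mem (ᾱ : KA ≃⋆ₐ[ℂ] KA) (h : ∀ i j a, ᾱ (S.θ i j a) = S.θ i j (α a))
    (d : C(I, KA)) (hd : d ∈ repSpan S α) : ᾱ (d 0) = d 1 := by
  unfold repSpan at hd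
  induction hd using Submodule.span_induction with
  | mem d hd =>
    obtain ⟨n, b, rfl⟩ := Set.mem_iUnion.1 hd
    exact rep_boundary S α ᾱ h n b
  | zero => simp
  | add x y _ _ h1 h2 => simp [h1, h2]
  | smul r x _ h => simp [h]

/-- Two points of `[0,1]` with the same image in the circle agree or are the two endpoints. -/
theorem eq_or_endpoints (s t : I)
    (h : ((-s : ℝ) : AddCircle (1 : ℝ)) = ((-t : ℝ) : AddCircle (1 : ℝ))) :
    s = t ∨ (s = 0 ∧ t = 1) ∨ (s = 1 ∧ t = 0) := by
  rw [← sub_eq_zero, ← AddCircle.coe_sub, AddCircle.coe_eq_zero_iff] at h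
  obtain ⟨n, hn⟩ := h
  rw [zsmul_eq_mul, mul_one] at hn
  have hs0 := s.2.1
  have hs1 := s.2.2
  have ht0 := t.2.1
  have ht1 := t.2.2
  have h1 : (-1 : ℝ) ≤ n := by linarith
  have h2 : (n : ℝ) ≤ 1 := by linarith
  have h1' : -1 ≤ n := by exact_mod_cast h1
  have h2' : n ≤ 1 := by exact_mod_cast h2
  obtain rfl | rfl | rfl : n = -1 ∨ n = 0 ∨ n = 1 := by omega
  · right; right
    push_cast at hn
    exact ⟨Subtype.ext (by rw [Set.Icc.coe_one]; linarith),
      Subtype.ext (by rw [Set.Icc.coe_zero]; linarith)⟩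
  · left
    push_cast at hn
    exact Subtype.ext (by linarith)
  · right; left
    push_cast at hn
    exact ⟨Subtype.ext (by rw [Set.Icc.coe_zero]; linarith),
      Subtype.ext (by rw [Set.Icc.coe_one]; linarith)⟩

/-- The span is dense in the mapping torus: local approximations are glued with a partition of
unity on the circle. -/
theorem closure_repSpan (ᾱ : KA ≃⋆ₐ[ℂ] KA) (h : ∀ i j a, ᾱ (S.θ i j a) = S.θ i j (α a)) :
    closure (repSpan S α : Set C(I, KA)) = {f : C(I, KA) | ᾱ (f 0) = f 1} := by
  have hnorm : ∀ x, ‖ᾱ x‖ = ‖x‖ := NonUnitalStarAlgHom.norm_map ᾱ ᾱ.injective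
  have hᾱc : Continuous ᾱ := (NonUnitalStarAlgHom.isometry ᾱ ᾱ.injective).continuous
  apply Set.Subset.antisymm
  · refine closure_minimal (fun d hd => boundary_of_mem S α ᾱ h d hd) (isClosed_eq ?_ ?_)
    · exact hᾱc.comp (continuous_eval_const (0 : I))
    · exact continuous_eval_const (1 : I)
  intro f hf
  rw [Set.mem_ofPred_eq] at hf
  rw [Metric.mem_closure_iff]
  intro ε hε
  let p : I → AddCircle (1 : ℝ) := fun t => ((-t : ℝ) : AddCircle (1 : ℝ))
  have hp : Continuous p := (AddCircle.continuous_mk' 1).comp (by fun_prop)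
  let U : repSpan S α → Set (AddCircle (1 : ℝ)) := fun d =>
    (p '' {t : I | ε / 2 ≤ ‖f t - d.1 t‖})ᶜ
  have hUo : ∀ d, IsOpen (U d) := fun d => by
    have hcl : IsClosed {t : I | ε / 2 ≤ ‖f t - d.1 t‖} :=
      isClosed_le continuous_const (f.continuous.sub d.1.continuous).norm
    exact (hcl.isCompact.image hp).isClosed.isOpen_compl
  have hUc : ∀ x, ∃ d, x ∈ U d := by
    intro x
    by_cases hx : ∃ t, p t = x
    · obtain ⟨t, rfl⟩ := hx
      obtain ⟨d, hd, hdt⟩ := exists_near_at S α t (f t) (ε / 2) (by positivity)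
      have hd' := boundary_of_mem S α ᾱ h d hd
      have h01 : ‖f 1 - d 1‖ = ‖f 0 - d 0‖ := by rw [← hf, ← hd', ← map_sub, hnorm]
      refine ⟨⟨d, hd⟩, ?_⟩
      rintro ⟨s, hs, hst⟩
      rw [Set.mem_ofPred_eq] at hs
      rcases eq_or_endpoints s t hst with rfl | ⟨rfl, rfl⟩ | ⟨rfl, rfl⟩
      · linarith
      · linarith
      · linarith
    · exact ⟨0, fun ⟨t, _, ht⟩ => hx ⟨t, ht⟩⟩
  obtain ⟨F, hF⟩ := isCompact_univ.elim_finite_subcover U hUo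
    (fun x _ => Set.mem_iUnion.2 (hUc x))
  obtain ⟨φ, hφ⟩ := PartitionOfUnity.exists_isSubordinate (isClosed_univ (X := AddCircle (1 : ℝ)))
    (fun d : F => U d) (fun d => hUo d) (by
      intro x hx
      obtain ⟨d, hd⟩ := Set.mem_iUnion.1 (hF hx)
      obtain ⟨hd, hd'⟩ := Set.mem_iUnion.1 hd
      exact Set.mem_iUnion.2 ⟨⟨d, hd⟩, hd'⟩)
  choose e he het using fun d : F => modulate_mem S α (φ d) d.1.1 d.1.2
  refine ⟨∑ d : F, e d, sum_mem fun d _ => he d, ?_⟩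
  rw [dist_eq_norm]
  refine lt_of_le_of_lt ((ContinuousMap.norm_le _ (by positivity : 0 ≤ ε / 2)).2 fun t => ?_)
    (by linarith)
  have hsum : ∑ d : F, φ d (p t) = 1 := by
    rw [← finsum_eq_sum_of_fintype]
    exact φ.sum_eq_one (Set.mem_univ _)
  have hsplit : (f - ∑ d : F, e d) t = ∑ d : F, ((φ d (p t) : ℝ) : ℂ) • (f t - d.1.1 t) := by
    simp only [smul_sub, Finset.sum_sub_distrib, ← Finset.sum_smul, ← Complex.ofReal_sum, hsum]
    simp [ContinuousMap.sum_apply, het, p]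
  rw [hsplit]
  calc ‖∑ d : F, ((φ d (p t) : ℝ) : ℂ) • (f t - d.1.1 t)‖
      ≤ ∑ d : F, φ d (p t) * (ε / 2) := by
        refine norm_sum_le_of_le _ fun d _ => ?_
        rw [norm_smul, Complex.norm_real, Real.norm_of_nonneg (φ.nonneg _ _)]
        by_cases h0 : φ d (p t) = 0
        · simp [h0]
        refine mul_le_mul_of_nonneg_left ?_ (φ.nonneg _ _)
        have hU : p t ∈ U d := hφ d (subset_tsupport _ h0)
        by_contra hlt
        exact hU ⟨t, (not_le.1 hlt).le, rfl⟩
    _ = ε / 2 := by rw [← Finset.sum_mul, hsum, one_mul]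

end MappingTorus

/-! ### The isomorphism -/

/-- Let `A` be a C*-algebra and `α : A → A` an automorphism.  Identifying
`C₀(ℝ) ⊗ A` with `C₀(ℝ, A)`, let `γ` be the ℤ-action on `C₀(ℝ, A)` generated by the
automorphism `τ̂ ⊗ α : f ↦ (t ↦ α (f (t+1)))`, let `KA` realise `𝒦 ⊗ A` with matrix
units `θ`, and let `ᾱ` be the automorphism `id_𝒦 ⊗ α` of `KA` (i.e. `ᾱ (θ i j a) =
θ i j (α a)`).  Then the crossed product `(C₀(ℝ) ⊗ A) ⋊_{τ̂ ⊗ α} ℤ` is isomorphic to the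
mapping torus `MT_{id_𝒦 ⊗ α} = { f ∈ C([0,1], 𝒦 ⊗ A) : (id_𝒦 ⊗ α)(f 0) = f 1 }`. -/
theorem stmt_13 (A : Type) [NonUnitalCStarAlgebra A] (α : A ≃⋆ₐ[ℂ] A)
    (γ : ℤ → C₀(ℝ, A) ≃⋆ₐ[ℂ] C₀(ℝ, A))
    (hγ_one : ∀ (f : C₀(ℝ, A)) (t : ℝ), γ 1 f t = α (f (t + 1)))
    (hγ_add : ∀ n m : ℤ, γ (n + m) = (γ n).trans (γ m))
    (KA : Type) [NonUnitalCStarAlgebra KA] (hKA : StabilizationData A KA)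
    (ᾱ : KA ≃⋆ₐ[ℂ] KA) (hᾱ : ∀ i j a, ᾱ (hKA.θ i j a) = hKA.θ i j (α a))
    (C : Type) [NonUnitalCStarAlgebra C] (hC : CrossedProductData C₀(ℝ, A) C γ) :
    ∃ ψ : C →⋆ₙₐ[ℂ] C(unitInterval, KA), Function.Injective ψ ∧
      Set.range ψ = {f : C(unitInterval, KA) | ᾱ (f 0) = f 1} := by
  have hγ := MappingTorus.action_apply α γ hγ_one hγ_add
  have hcl := MappingTorus.closure_repSpan hKA α ᾱ hᾱ
  rw [← hcl]
  -- compressions by the corners `e_{ii} ⊗ A` of the moving matrix units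
  let T : (ℤ × A × A × unitInterval) → C(unitInterval, KA) →L[ℂ] KA := fun x =>
    ((ContinuousLinearMap.mul ℂ KA).flip ((hKA.path x.2.2.2).θ x.1 x.1 x.2.2.1)).comp
      (((ContinuousLinearMap.mul ℂ KA) ((hKA.path x.2.2.2).θ x.1 x.1 x.2.1)).comp
        (ContinuousMap.evalCLM ℂ x.2.2.2))
  have hT : ∀ i a b t f, T (i, a, b, t) f =
      (hKA.path t).θ i i a * f t * (hKA.path t).θ i i b := fun _ _ _ _ _ => rfl
  refine exists_starHom_of_compressions hC (MappingTorus.rep hKA α)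
    (MappingTorus.rep_add hKA α 0) (MappingTorus.rep_smul hKA α 0)
    (MappingTorus.rep_mul hKA α γ hγ) (MappingTorus.rep_star hKA α γ hγ)
    (MappingTorus.continuous_rep hKA α 0) T ?_ ?_ ?_
  · rintro ⟨i, a, b, t⟩ n f hn
    rw [hT, MappingTorus.compression_rep, if_neg (by omega)]
  · intro f hf
    ext s
    -- write `s = i - t` with `i` an integer and `t ∈ [0,1]`
    have ht : (⌈s⌉ : ℝ) - s ∈ Set.Icc (0 : ℝ) 1 :=
      ⟨by linarith [Int.le_ceil s], by linarith [Int.ceil_lt_add_one s]⟩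
    apply (α ^ ⌈s⌉).injective
    rw [ZeroAtInftyContinuousMap.zero_apply, map_zero]
    refine StabilizationData.eq_zero_of_mul_mul _ fun x y => ?_
    have h := hf (⌈s⌉, x, y, ⟨_, ht⟩)
    rw [hT, MappingTorus.compression_rep, if_pos (add_zero _), sub_sub_cancel] at h
    exact StabilizationData.θ_injective _ _ _ (h.trans (StabilizationData.θ_zero _ _ _).symm)
  · intro y hy
    ext t
    exact (hKA.path t).eq_zero_of_corners (y t) fun i a b => hy (i, a, b, t)
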